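/- Let a > 2. Then for Lebesgue-almost every z₀ ∈ [-a, 2], the orbit z_t = f_a^{(t)}(z₀) satisfies lim_{t→∞} |z_t| = +∞. -/

import Mathlib

open MeasureTheory Filter

/-- The cubic map `f_a(z) = z * g_a(z)` with `g_a(z) = z^2 + (a-2)z + 1 - 2a`. -/
noncomputable def fa (a z : ℝ) : ℝ := z * (z ^ 2 + (a - 2) * z + 1 - 2 * a)

/-!
The set `K` of points whose orbit never leaves `[-a, 2]` is shown to be null; every other orbit
escapes geometrically (`tendsto_of_gt`, `tendsto_of_lt`).

With `u = z + a`, the factorisations `f z + a = (z - 1)² (z + a)` and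
`2 - f z = (2 - z) (z² + a z + 1)` show that `f` behaves like a Chebyshev polynomial of degree
three (which it is, up to conjugacy, at `a = 2`). Measure lengths by the arcsine density
`ρ(z) = 1 / √((z + a) (2 - z))`, which is integrable on `[-a, 2]`. The squared expansion of `f` for
this metric is `(3 z + 2 a - 1)² / (z² + a z + 1)`, and
`(3 z + 2 a - 1)² - 9 (z² + a z + 1) = (a - 2) (3 z + 4 a + 4)`,
so `f` expands `ρ` by a constant factor `μ > 3` (`expansion`). On the other hand `f` has only three
monotone branches, each mapping its part of `K` injectively into `K`. Hence
`μ ρ(K) ≤ 3 ρ(K)`, and since `ρ(K)` is finite, it vanishes. In particular the critical point `1`,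
which never escapes because it is mapped to the fixed point `-a`, needs no separate treatment.
-/

lemma fa_add (a z : ℝ) : fa a z + a = (z - 1) ^ 2 * (z + a) := by unfold fa; ring

lemma two_sub_fa (a z : ℝ) : 2 - fa a z = (2 - z) * (z ^ 2 + a * z + 1) := by unfold fa; ring

lemma hasDerivAt_fa (a z : ℝ) : HasDerivAt (fa a) ((z - 1) * (3 * z + 2 * a - 1)) z := by
  have h := (hasDerivAt_id z).mul
    (((((hasDerivAt_id z).pow 2).add ((hasDerivAt_id z).const_mul (a - 2))).add_const 1).sub_const
      (2 * a))
  refine h.congr_deriv ?_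
  simp
  ring

lemma continuous_fa (a : ℝ) : Continuous (fa a) := by unfold fa; fun_prop

/-! ### Escape to infinity outside `[-a, 2]` -/

lemma tendsto_of_gt {a x : ℝ} (ha : 2 < a) (hx : 2 < x) :
    Tendsto (fun t : ℕ => |(fa a)^[t] x|) atTop atTop := by
  have key : ∀ t : ℕ, 9 ^ t * (x - 2) ≤ (fa a)^[t] x - 2 := by
    intro t
    induction t with
    | zero => simp
    | succ t ih =>
      rw [Function.iterate_succ_apply']
      set y := (fa a)^[t] x
      have h0 : 0 < (9 : ℝ) ^ t * (x - 2) := by have := sub_pos.2 hx; positivity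
      have hy : 0 < y - 2 := h0.trans_le ih
      have h1 := two_sub_fa a y
      have h2 : 9 ≤ y ^ 2 + a * y + 1 := by nlinarith
      have h3 : (y - 2) * 9 ≤ (y - 2) * (y ^ 2 + a * y + 1) := by gcongr
      rw [pow_succ]
      linarith
  have h9 : Tendsto (fun t : ℕ => (9 : ℝ) ^ t * (x - 2)) atTop atTop :=
    (tendsto_pow_atTop_atTop_of_one_lt (by norm_num)).atTop_mul_const (sub_pos.2 hx)
  refine tendsto_atTop_mono (fun t => ?_) h9
  exact ((key t).trans (by linarith)).trans (le_abs_self _)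

lemma tendsto_of_lt {a x : ℝ} (ha : 2 < a) (hx : x < -a) :
    Tendsto (fun t : ℕ => |(fa a)^[t] x|) atTop atTop := by
  have hx' : 0 < -a - x := by linarith
  have key : ∀ t : ℕ, 9 ^ t * (-a - x) ≤ -a - (fa a)^[t] x := by
    intro t
    induction t with
    | zero => simp
    | succ t ih =>
      rw [Function.iterate_succ_apply']
      set y := (fa a)^[t] x
      have h0 : 0 < (9 : ℝ) ^ t * (-a - x) := by positivity
      have hy : 0 < -a - y := h0.trans_le ih
      have h1 := fa_add a y
      have h2 : 9 ≤ (y - 1) ^ 2 := by nlinarith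
      have h3 : (-a - y) * 9 ≤ (-a - y) * (y - 1) ^ 2 := by gcongr
      rw [pow_succ]
      linarith
  have h9 : Tendsto (fun t : ℕ => (9 : ℝ) ^ t * (-a - x)) atTop atTop :=
    (tendsto_pow_atTop_atTop_of_one_lt (by norm_num)).atTop_mul_const hx'
  refine tendsto_atTop_mono (fun t => ?_) h9
  exact ((key t).trans (by linarith)).trans (neg_le_abs _)

lemma tendsto_of_exit {a z : ℝ} (ha : 2 < a) {n : ℕ}
    (hn : (fa a)^[n] z ∉ Set.Icc (-a) 2) :
    Tendsto (fun t : ℕ => |(fa a)^[t] z|) atTop atTop := by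
  refine (tendsto_add_atTop_iff_nat n).1 ?_
  simp only [Function.iterate_add_apply]
  rcases lt_or_ge ((fa a)^[n] z) (-a) with h | h
  · exact tendsto_of_lt ha h
  · exact tendsto_of_gt ha (not_le.1 fun h' => hn ⟨h, h'⟩)

/-! ### The arcsine density and its expansion -/

/-- The (unnormalised) arcsine density of the interval `[-a, 2]`; it takes the junk value `0`
at the endpoints and outside the interval. -/
noncomputable def rho (a z : ℝ) : ℝ := (√((z + a) * (2 - z)))⁻¹

lemma rho_nonneg (a z : ℝ) : 0 ≤ rho a z := by unfold rho; positivity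

lemma measurable_rho (a : ℝ) : Measurable (rho a) := by unfold rho; fun_prop

/-- The primitive of `rho a` is an affine reparametrisation of `arcsin`. -/
lemma integrableOn_rho {a : ℝ} (ha : 2 < a) : IntegrableOn (rho a) (Set.Ioc (-a) 2) := by
  have hL : 0 < a + 2 := by linarith
  refine intervalIntegral.integrableOn_deriv_of_nonneg
    (g := fun z => Real.arcsin ((2 * z + a - 2) / (a + 2))) ?_ ?_ fun z _ => rho_nonneg a z
  · exact (Real.continuous_arcsin.comp (by fun_prop)).continuousOn
  · rintro z ⟨h1, h2⟩
    have ht1 : (2 * z + a - 2) / (a + 2) ≠ -1 := by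
      rw [Ne, div_eq_iff hL.ne']; intro h; linarith
    have ht2 : (2 * z + a - 2) / (a + 2) ≠ 1 := by
      rw [Ne, div_eq_iff hL.ne']; intro h; linarith
    have hd : HasDerivAt (fun z : ℝ => (2 * z + a - 2) / (a + 2)) (2 / (a + 2)) z := by
      have := ((((hasDerivAt_id z).const_mul 2).add_const a).sub_const 2).div_const (a + 2)
      simpa using this
    refine ((Real.hasDerivAt_arcsin ht1 ht2).comp z hd).congr_deriv ?_
    have hs : 1 - ((2 * z + a - 2) / (a + 2)) ^ 2 = (2 / (a + 2)) ^ 2 * ((z + a) * (2 - z)) := by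
      field_simp; ring
    have hp : 0 < (z + a) * (2 - z) := mul_pos (by linarith) (by linarith)
    rw [hs, Real.sqrt_mul (by positivity), Real.sqrt_sq (by positivity), rho]
    have := Real.sqrt_pos.2 hp
    field_simp

/-- A uniform lower bound, larger than `3`, for the expansion of `fa a` in the metric `rho a`.
It comes from bounding `(a - 2) (3 z + 4 a + 4)` below and `z² + a z + 1` above on `[-a, 2]`. -/
noncomputable def mu (a : ℝ) : ℝ := √(9 + (a - 2) * (a + 4) / (2 * a + 5))

lemma three_lt_mu {a : ℝ} (ha : 2 < a) : 3 < mu a := by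
  have : 0 < (a - 2) * (a + 4) / (2 * a + 5) :=
    div_pos (mul_pos (by linarith) (by linarith)) (by linarith)
  exact Real.lt_sqrt_of_sq_lt (by linarith)

lemma expansion {a z : ℝ} (ha : 2 < a) (hz : z ∈ Set.Icc (-a) 2)
    (hf : fa a z ∈ Set.Ioo (-a) 2) :
    mu a * rho a z ≤ |(z - 1) * (3 * z + 2 * a - 1)| * rho a (fa a z) := by
  obtain ⟨hz1, hz2⟩ := hz
  have e1 := fa_add a z
  have e2 := two_sub_fa a z
  have p1 : 0 < (z - 1) ^ 2 * (z + a) := by rw [← e1]; linarith [hf.1]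
  have p2 : 0 < (2 - z) * (z ^ 2 + a * z + 1) := by rw [← e2]; linarith [hf.2]
  have hza : 0 < z + a := pos_of_mul_pos_right p1 (by positivity)
  have hz1' : 0 < |z - 1| := by
    rw [abs_pos]; intro h; rw [h] at p1; simp at p1
  have hq : 0 < z ^ 2 + a * z + 1 := pos_of_mul_pos_right p2 (by linarith)
  have h2z : 0 < 2 - z := pos_of_mul_pos_left p2 hq.le
  have hm : mu a * √(z ^ 2 + a * z + 1) ≤ |3 * z + 2 * a - 1| := by
    have hc : 0 ≤ (a - 2) * (a + 4) / (2 * a + 5) :=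
      div_nonneg (mul_nonneg (by linarith) (by linarith)) (by linarith)
    rw [mu, ← Real.sqrt_mul (by linarith)]
    refine Real.sqrt_le_iff.2 ⟨abs_nonneg _, ?_⟩
    rw [sq_abs]
    have hq' : z ^ 2 + a * z + 1 ≤ 2 * a + 5 := by nlinarith
    have h1 : (a - 2) * (a + 4) / (2 * a + 5) * (z ^ 2 + a * z + 1) ≤ (a - 2) * (a + 4) := by
      calc _ ≤ (a - 2) * (a + 4) / (2 * a + 5) * (2 * a + 5) := by gcongr
        _ = _ := div_mul_cancel₀ _ (by linarith)
    nlinarith [mul_nonneg (sub_nonneg.2 ha.le) hza.le]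
  have hsq : √((fa a z + a) * (2 - fa a z)) =
      |z - 1| * (√((z + a) * (2 - z)) * √(z ^ 2 + a * z + 1)) := by
    rw [e1, e2, ← Real.sqrt_sq_eq_abs, ← Real.sqrt_mul (by positivity), ← Real.sqrt_mul (by positivity)]
    congr 1; ring
  have s1 : 0 < √((z + a) * (2 - z)) := Real.sqrt_pos.2 (by positivity)
  have s2 : 0 < √(z ^ 2 + a * z + 1) := Real.sqrt_pos.2 hq
  rw [rho, rho, hsq, abs_mul, ← div_eq_mul_inv, ← div_eq_mul_inv, div_le_div_iff₀ s1 (by positivity)]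
  calc _ = (|z - 1| * √((z + a) * (2 - z))) * (mu a * √(z ^ 2 + a * z + 1)) := by ring
    _ ≤ (|z - 1| * √((z + a) * (2 - z))) * |3 * z + 2 * a - 1| := by gcongr
    _ = _ := by ring

/-- The exceptional points excluded by `expansion` are finitely many. -/
lemma ae_fa_ne (a : ℝ) : ∀ᵐ z : ℝ, fa a z ≠ -a ∧ fa a z ≠ 2 := by
  have hfin : ({1, -a, 2, -a / 2 + √(a ^ 2 / 4 - 1), -a / 2 - √(a ^ 2 / 4 - 1)} : Set ℝ).Finite :=
    Set.toFinite _
  filter_upwards [hfin.countable.ae_notMem volume] with z hz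
  simp only [Set.mem_insert_iff, Set.mem_singleton_iff, not_or] at hz
  obtain ⟨h1, h2, h3, h4, h5⟩ := hz
  constructor
  · intro h
    have e := fa_add a z
    rw [h, neg_add_cancel] at e
    rcases mul_eq_zero.1 e.symm with e | e
    · exact h1 (sub_eq_zero.1 (pow_eq_zero_iff two_ne_zero |>.1 e))
    · exact h2 (eq_neg_of_add_eq_zero_left e)
  · intro h
    have e := two_sub_fa a z
    rw [h, sub_self] at e
    rcases mul_eq_zero.1 e.symm with e | e
    · exact h3 (sub_eq_zero.1 e).symm
    · have hs : (z + a / 2) ^ 2 = a ^ 2 / 4 - 1 := by linarith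
      have hs' : √(a ^ 2 / 4 - 1) = |z + a / 2| := by rw [← hs, Real.sqrt_sq_eq_abs]
      rcases abs_choice (z + a / 2) with h | h
      · exact h4 (by rw [hs', h]; ring)
      · exact h5 (by rw [hs', h]; ring)

/-! ### The non-escaping set is null -/

/-- The points whose whole forward orbit stays in `[-a, 2]`. -/
def trapped (a : ℝ) : Set ℝ := {z | ∀ n : ℕ, (fa a)^[n] z ∈ Set.Icc (-a) 2}

lemma trapped_subset (a : ℝ) : trapped a ⊆ Set.Icc (-a) 2 := fun _ hz => hz 0

lemma fa_mem_trapped {a z : ℝ} (hz : z ∈ trapped a) : fa a z ∈ trapped a :=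
  fun n => by simpa only [Function.iterate_succ_apply] using hz (n + 1)

lemma measurableSet_trapped (a : ℝ) : MeasurableSet (trapped a) := by
  have : trapped a = ⋂ n : ℕ, (fa a)^[n] ⁻¹' Set.Icc (-a) 2 := by ext; simp [trapped]
  rw [this]
  exact (isClosed_iInter fun n =>
    isClosed_Icc.preimage ((continuous_fa a).iterate n)).measurableSet

/-- A piece of the trapped set on which `fa a` is injective carries at most the fraction `1 / mu a`
of the arcsine mass of the trapped set, by the change of variables formula. -/
lemma branch_le {a : ℝ} (ha : 2 < a) {s : Set ℝ} (hs : MeasurableSet s)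
    (hinj : Set.InjOn (fa a) s) :
    ENNReal.ofReal (mu a) * ∫⁻ z in trapped a ∩ s, ENNReal.ofReal (rho a z) ≤
      ∫⁻ z in trapped a, ENNReal.ofReal (rho a z) := by
  have hm := (measurableSet_trapped a).inter hs
  calc ENNReal.ofReal (mu a) * ∫⁻ z in trapped a ∩ s, ENNReal.ofReal (rho a z)
      = ∫⁻ z in trapped a ∩ s, ENNReal.ofReal (mu a) * ENNReal.ofReal (rho a z) :=
        (lintegral_const_mul _ (measurable_rho a).ennreal_ofReal).symm
    _ ≤ ∫⁻ z in trapped a ∩ s, ENNReal.ofReal |(z - 1) * (3 * z + 2 * a - 1)| *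
          ENNReal.ofReal (rho a (fa a z)) := by
        refine lintegral_mono_ae ((ae_restrict_iff' hm).2 ?_)
        filter_upwards [ae_fa_ne a] with z hz hzK
        have h1 := trapped_subset a (fa_mem_trapped hzK.1)
        rw [← ENNReal.ofReal_mul (by linarith [three_lt_mu ha]), ← ENNReal.ofReal_mul (abs_nonneg _)]
        exact ENNReal.ofReal_le_ofReal (expansion ha (trapped_subset a hzK.1)
          ⟨lt_of_le_of_ne h1.1 hz.1.symm, lt_of_le_of_ne h1.2 hz.2⟩)
    _ = ∫⁻ z in fa a '' (trapped a ∩ s), ENNReal.ofReal (rho a z) :=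
        (lintegral_image_eq_lintegral_abs_deriv_mul hm
          (fun z _ => (hasDerivAt_fa a z).hasDerivWithinAt)
          (hinj.mono Set.inter_subset_right) fun w => ENNReal.ofReal (rho a w)).symm
    _ ≤ ∫⁻ z in trapped a, ENNReal.ofReal (rho a z) := by
        refine lintegral_mono_set ?_
        rintro _ ⟨z, hz, rfl⟩
        exact fa_mem_trapped hz.1

lemma injOn_left {a : ℝ} (ha : 2 < a) : Set.InjOn (fa a) (Set.Iic ((1 - 2 * a) / 3)) := by
  refine (strictMonoOn_of_deriv_pos (convex_Iic _) (continuous_fa a).continuousOn ?_).injOn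
  intro z hz
  rw [interior_Iic, Set.mem_Iio] at hz
  rw [(hasDerivAt_fa a z).deriv]
  exact mul_pos_of_neg_of_neg (by linarith) (by linarith)

lemma injOn_mid (a : ℝ) : Set.InjOn (fa a) (Set.Icc ((1 - 2 * a) / 3) 1) := by
  refine (strictAntiOn_of_deriv_neg (convex_Icc _ _) (continuous_fa a).continuousOn ?_).injOn
  intro z hz
  rw [interior_Icc] at hz
  rw [(hasDerivAt_fa a z).deriv]
  exact mul_neg_of_neg_of_pos (by linarith [hz.2]) (by linarith [hz.1])

lemma injOn_right {a : ℝ} (ha : 2 < a) : Set.InjOn (fa a) (Set.Ici 1) := by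
  refine (strictMonoOn_of_deriv_pos (convex_Ici _) (continuous_fa a).continuousOn ?_).injOn
  intro z hz
  rw [interior_Ici, Set.mem_Ioi] at hz
  rw [(hasDerivAt_fa a z).deriv]
  exact mul_pos (by linarith) (by linarith)

lemma lintegral_trapped {a : ℝ} (ha : 2 < a) :
    ∫⁻ z in trapped a, ENNReal.ofReal (rho a z) = 0 := by
  set M := ∫⁻ z in trapped a, ENNReal.ofReal (rho a z) with hM
  have hfin : M ≠ ⊤ := by
    refine ne_top_of_le_ne_top ?_ (lintegral_mono_set (trapped_subset a))
    rw [setLIntegral_congr Ioc_ae_eq_Icc.symm]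
    exact (integrableOn_rho ha).lintegral_lt_top.ne
  have hsum : M ≤ (∫⁻ z in trapped a ∩ Set.Iic ((1 - 2 * a) / 3), ENNReal.ofReal (rho a z)) +
      ((∫⁻ z in trapped a ∩ Set.Icc ((1 - 2 * a) / 3) 1, ENNReal.ofReal (rho a z)) +
      ∫⁻ z in trapped a ∩ Set.Ici 1, ENNReal.ofReal (rho a z)) := by
    refine le_trans (lintegral_mono_set ?_) ((lintegral_union_le _ _ _).trans
      (add_le_add le_rfl (lintegral_union_le _ _ _)))
    intro z hz
    rcases le_total z ((1 - 2 * a) / 3) with h | h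
    · exact Or.inl ⟨hz, h⟩
    · rcases le_total z 1 with h' | h'
      · exact Or.inr (Or.inl ⟨hz, h, h'⟩)
      · exact Or.inr (Or.inr ⟨hz, h'⟩)
  have h3 : ENNReal.ofReal (mu a) * M ≤ M + (M + M) := by
    refine (mul_le_mul_right hsum _).trans ?_
    rw [mul_add, mul_add]
    exact add_le_add (branch_le ha measurableSet_Iic (injOn_left ha))
      (add_le_add (branch_le ha measurableSet_Icc (injOn_mid a))
        (branch_le ha measurableSet_Ici (injOn_right ha)))
  have h4 := ENNReal.toReal_mono (by finiteness) h3
  rw [ENNReal.toReal_mul, ENNReal.toReal_ofReal (by linarith [three_lt_mu ha]),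
    ENNReal.toReal_add hfin (by finiteness), ENNReal.toReal_add hfin hfin] at h4
  have h5 : M.toReal = 0 := by
    have := three_lt_mu ha
    have h0 : 0 ≤ M.toReal := ENNReal.toReal_nonneg
    nlinarith
  exact ((ENNReal.toReal_eq_zero_iff _).1 h5).resolve_right hfin

lemma ae_notMem_trapped {a : ℝ} (ha : 2 < a) : ∀ᵐ z : ℝ, z ∉ trapped a := by
  have h := (lintegral_eq_zero_iff (measurable_rho a).ennreal_ofReal).1 (lintegral_trapped ha)
  have h' := (ae_restrict_iff' (measurableSet_trapped a)).1 h
  filter_upwards [h', (Set.toFinite ({-a, 2} : Set ℝ)).countable.ae_notMem volume] with z hz hne hzK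
  simp only [Set.mem_insert_iff, Set.mem_singleton_iff, not_or] at hne
  obtain ⟨h1, h2⟩ := trapped_subset a hzK
  have h1' := lt_of_le_of_ne h1 (Ne.symm hne.1)
  have h2' := lt_of_le_of_ne h2 hne.2
  have hp : 0 < rho a z :=
    inv_pos.2 (Real.sqrt_pos.2 (mul_pos (by linarith) (by linarith)))
  exact absurd (ENNReal.ofReal_eq_zero.1 (hz hzK)) (not_le.2 hp)

/-- For `a > 2`, for Lebesgue-almost every `z₀ ∈ [-a, 2]` the orbit
`z_t = f_a^{(t)}(z₀)` satisfies `|z_t| → +∞`. -/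
theorem cubic_ae_divergence (a : ℝ) (ha : 2 < a) :
    ∀ᵐ z₀ ∂(volume.restrict (Set.Icc (-a) (2 : ℝ))),
      Tendsto (fun t : ℕ => |(fa a)^[t] z₀|) atTop atTop := by
  filter_upwards [ae_restrict_of_ae (ae_notMem_trapped ha)] with z hz
  obtain ⟨n, hn⟩ := not_forall.1 hz
  exact tendsto_of_exit ha hn
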